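/- Let n be a positive integer, let E and I be finite sets, let d : E -> R^n be a family of vectors, and let c : I -> (E -> R) be a linearly independent family spanning a linear subspace H of R^E. Suppose that for every epsilon in I and every index i in {1, ..., n} there exist an element e of E and a nonzero real number lambda such that d(e) = lambda * u_i (where u_i denotes the i-th standard basis vector of R^n), c(epsilon)(e) is nonzero, and c(epsilon')(e) = 0 for every epsilon' in I different from epsilon. Then the linear map Phi : R^E -> Hom_R(H, R^n) defined by Phi(l)(h) = sum over e in E of l_e * h_e * d(e) is surjective. -/

import Mathlib

/-- Linear-algebra criterion for surjectivity of the abundancy map.  Let `d : E → ℝ^n`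
be a family of vectors and `c : I → ℝ^E` a linearly independent family spanning a
subspace `H` of `ℝ^E`.  Suppose for every `ε ∈ I` and every coordinate direction
`i ∈ {1, …, n}` there are `e ∈ E` and `λ ≠ 0` with `d e = λ • uᵢ`, `c ε e ≠ 0`, and
`c ε' e = 0` for all `ε' ≠ ε`.  Then the linear map
`Φ : ℝ^E → Hom(H, ℝ^n)`, `Φ(l)(h) = ∑ₑ lₑ hₑ d(e)`, is surjective:
every linear map `H → ℝ^n` is of the form `Φ(l)`. -/
theorem abundancy_map_surjective
    (n : ℕ) (hn : 0 < n) (E I : Type) [Fintype E] [Fintype I]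
    (d : E → (Fin n → ℝ)) (c : I → (E → ℝ))
    (hc : LinearIndependent ℝ c)
    (hyp : ∀ (ε : I) (i : Fin n), ∃ (e : E) (lam : ℝ), lam ≠ 0 ∧
        d e = lam • (Pi.single i 1 : Fin n → ℝ) ∧
        c ε e ≠ 0 ∧ ∀ ε' : I, ε' ≠ ε → c ε' e = 0) :
    ∀ φ : (Submodule.span ℝ (Set.range c)) →ₗ[ℝ] (Fin n → ℝ),
      ∃ l : E → ℝ, ∀ h : Submodule.span ℝ (Set.range c),
        φ h = ∑ e : E, (l e * (h : E → ℝ) e) • d e := by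
  classical
  intro φ
  choose e lam hlam hd hne hzero using hyp
  have hmem (ε : I) : c ε ∈ Submodule.span ℝ (Set.range c) :=
    Submodule.subset_span (Set.mem_range_self ε)
  set a : I → Fin n → ℝ := fun ε i => φ ⟨c ε, hmem ε⟩ i / (c ε (e ε i) * lam ε i) with ha
  refine ⟨fun x => ∑ ε, ∑ i, if e ε i = x then a ε i else 0, ?_⟩
  have key (h : E → ℝ) :
      ∑ x, ((∑ ε, ∑ i, if e ε i = x then a ε i else 0) * h x) • d x =
        ∑ ε, ∑ i, (a ε i * h (e ε i)) • d (e ε i) := by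
    simp only [Finset.sum_mul, Finset.sum_smul]
    rw [Finset.sum_comm]
    refine Finset.sum_congr rfl fun ε _ => ?_
    rw [Finset.sum_comm]
    simp [ite_mul, ite_smul]
  rintro ⟨h, hh⟩
  rw [key]
  induction hh using Submodule.span_induction with
  | mem x hx =>
    obtain ⟨ε, rfl⟩ := hx
    rw [Finset.sum_eq_single ε]
    · ext j
      simp only [hd, Finset.sum_apply, Pi.smul_apply, smul_eq_mul, Pi.single_apply]
      rw [Finset.sum_eq_single j]
      · have h₁ := hne ε j
        have h₂ := hlam ε j
        simp only [ha, if_true]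
        field_simp
      · intro i _ hij
        simp [hij.symm]
      · simp
    · intro ε' _ hε
      refine Finset.sum_eq_zero fun i _ => ?_
      simp [hzero ε' i ε hε.symm]
    · simp
  | zero =>
    simp only [Pi.zero_apply, mul_zero, zero_smul, Finset.sum_const_zero]
    exact map_zero φ
  | add x y hx hy ihx ihy =>
    have hφ : φ ⟨x + y, add_mem hx hy⟩ = φ ⟨x, hx⟩ + φ ⟨y, hy⟩ := map_add φ ⟨x, hx⟩ ⟨y, hy⟩
    rw [hφ, ihx, ihy]
    simp only [Pi.add_apply, mul_add, add_smul, Finset.sum_add_distrib]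
  | smul r x hx ih =>
    have hφ : φ ⟨r • x, Submodule.smul_mem _ r hx⟩ = r • φ ⟨x, hx⟩ := map_smul φ r ⟨x, hx⟩
    rw [hφ, ih]
    simp only [Finset.smul_sum, smul_smul, Pi.smul_apply, smul_eq_mul, mul_left_comm]
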